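/- There exists C > 0, depending on Γ_D but independent of how the mesh intersects the boundary, such that for every element K ∈ M_{0,h} and every v ∈ H¹(K), ‖v‖²_{L²(Γ_K)} ≤ C( ‖h^{−1/2} v‖²_{L²(K)} + ‖h^{1/2} ∇v‖²_{L²(K)} ), where Γ_K = Γ_D ∩ cl(K). -/

import Mathlib

open Set Metric MeasureTheory
open scoped InnerProductSpace NNReal ENNReal

noncomputable section

/-- Euclidean space `ℝᵈ`. -/
abbrev Euc (d : ℕ) : Type := EuclideanSpace ℝ (Fin d)

/-- The open parametric unit cube `(0,1)ᵈ`. -/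
def unitCube (d : ℕ) : Set (Euc d) := {x : Euc d | ∀ i, x i ∈ Ioo (0 : ℝ) 1}

/-- `Q ⊆ ℝᵈ` is an open axis-aligned box. -/
def IsBox {d : ℕ} (Q : Set (Euc d)) : Prop :=
  ∃ a b : Fin d → ℝ, (∀ i, a i < b i) ∧ Q = {x : Euc d | ∀ i, x i ∈ Ioo (a i) (b i)}

/-- Tensor-product polynomial functions of coordinate degree at most `p`
(the space `Q_p(ℝᵈ)`). -/
def IsQPoly {d : ℕ} (p : ℕ) (f : Euc d → ℝ) : Prop :=
  ∃ P : MvPolynomial (Fin d) ℝ, (∀ i, P.degreeOf i ≤ p) ∧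
    ∀ x : Euc d, f x = MvPolynomial.eval (fun i => x i) P

/-- The surface measure: the `(d-1)`-dimensional Hausdorff measure on `ℝᵈ`. -/
def sMeas (d : ℕ) : Measure (Euc d) := μH[(d : ℝ) - 1]

/-- The geometric setting of isogeometric analysis on a trimmed domain:
an untrimmed patch `Ω₀ = F((0,1)ᵈ)` described by a bi-Lipschitz map `F`,
a trimmed (Lipschitz) computational domain `Ω = Ω₀ \ cl(Ω₁)`, the trimming
curve `Γ_trim = ∂Ω ∩ ∂Ω₁`, a Dirichlet part `Γ_D ⊆ ∂Ω` with outward unit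
normal `nrm`. -/
structure Geom (d : ℕ) : Type where
  /-- untrimmed physical domain -/
  Ω₀ : Set (Euc d)
  /-- trimmed-away region -/
  Ω₁ : Set (Euc d)
  /-- trimmed computational domain -/
  Ω : Set (Euc d)
  /-- Dirichlet boundary -/
  ΓD : Set (Euc d)
  /-- trimming curve -/
  Γtrim : Set (Euc d)
  /-- isogeometric parametrization -/
  F : Euc d → Euc d
  /-- inverse of the parametrization -/
  Finv : Euc d → Euc d
  /-- outward unit normal to `∂Ω` -/
  nrm : Euc d → Euc d
  /-- bi-Lipschitz constant of `F` -/
  biLip : ℝ≥0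
  Ω₀_open : IsOpen Ω₀
  trim_def : Ω = Ω₀ \ closure Ω₁
  Ω_open : IsOpen Ω
  Γtrim_def : Γtrim = frontier Ω ∩ frontier Ω₁
  ΓD_sub : ΓD ⊆ frontier Ω
  nrm_unit : ∀ x ∈ frontier Ω, ‖nrm x‖ = 1
  F_image : F '' unitCube d = Ω₀
  F_leftInv : ∀ x ∈ closure (unitCube d), Finv (F x) = x
  F_rightInv : ∀ y ∈ closure Ω₀, F (Finv y) = y
  F_lip : LipschitzOnWith biLip F (closure (unitCube d))
  Finv_lip : LipschitzOnWith biLip Finv (closure Ω₀)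
  /-- `Ω` is a Lipschitz domain: uniform interior cone condition. -/
  lipschitz_bdry : ∀ x ∈ frontier Ω, ∃ (e : Euc d) (r lam : ℝ),
    ‖e‖ = 1 ∧ 0 < r ∧ 0 < lam ∧
    ∀ y ∈ Metric.ball x r ∩ closure Ω, ∀ t ∈ Ioo (0 : ℝ) r,
      Metric.ball (y + t • e) (lam * t) ⊆ Ω

namespace Geom

variable {d : ℕ} (G : Geom d)

/-- The physical element `K = F(Q)` associated with a parametric element `Q`. -/
def phys (Q : Set (Euc d)) : Set (Euc d) := G.F '' Q

/-- `Γ_K = Γ_D ∩ cl(K)` for the physical element `K = F(Q)`. -/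
def ΓK (Q : Set (Euc d)) : Set (Euc d) := G.ΓD ∩ closure (G.phys Q)

/-- The normal derivative `∂u/∂n = ∇u ⋅ n`. -/
def dn (u : Euc d → ℝ) (x : Euc d) : ℝ := ⟪gradient u x, G.nrm x⟫_ℝ

end Geom

/-- A trimmed isogeometric Bézier mesh (of a given size level) together with the
isogeometric spline space `Ṽ_h` of degree `p`:  `pMesh` is the (active) parametric
Bézier mesh, `pCut` the family of elements cut by the trimming curve, `pGood` the
family of good elements (volume fraction at least `θ`), `nb` a choice of good
neighbor, `hsz` the piecewise-constant mesh-size function and `hmax` the global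
mesh size.  `Cshape` is the shape-regularity constant, `Cnb` the neighbor-distance
constant and `CΓ` the constant in the assumption `|Γ_K| ≤ CΓ h_K^{d-1}`. -/
structure Mesh (d p : ℕ) (G : Geom d) (θ Cshape Cnb CΓ : ℝ) : Type where
  pMesh : Finset (Set (Euc d))
  pCut : Finset (Set (Euc d))
  pGood : Finset (Set (Euc d))
  nb : Set (Euc d) → Set (Euc d)
  hsz : Euc d → ℝ
  hmax : ℝ
  Vh : Submodule ℝ (Euc d → ℝ)
  mesh_boxes : ∀ Q ∈ pMesh, IsBox Q
  mesh_sub : ∀ Q ∈ pMesh, Q ⊆ unitCube d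
  mesh_active : ∀ Q ∈ pMesh, (Q ∩ G.Finv '' G.Ω).Nonempty
  mesh_cover : G.Finv '' G.Ω ⊆ ⋃ Q ∈ pMesh, closure Q
  /-- shape regularity: each edge of an element is comparable to its diameter -/
  shape_reg : ∀ Q ∈ pMesh, ∀ a b : Fin d → ℝ,
    Q = {x : Euc d | ∀ i, x i ∈ Ioo (a i) (b i)} → ∀ i, Cshape * diam Q ≤ b i - a i
  shape_pos : 0 < Cshape
  /-- `F` and `F⁻¹` are smooth on the closure of every element -/
  F_smooth : ∀ Q ∈ pMesh, ContDiffOn ℝ (⊤ : ℕ∞) G.F (closure Q)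
  Finv_smooth : ∀ Q ∈ pMesh, ContDiffOn ℝ (⊤ : ℕ∞) G.Finv (closure (G.phys Q))
  cut_sub : pCut ⊆ pMesh
  /-- `G_h` consists exactly of the elements cut by the trimming curve -/
  cut_iff : ∀ Q ∈ pMesh, (Q ∈ pCut ↔ (closure (G.phys Q) ∩ G.Γtrim).Nonempty)
  good_sub : pGood ⊆ pMesh
  θ_mem : θ ∈ Ioc (0 : ℝ) 1
  /-- good elements: volume fraction of `Ω̂ ∩ Q` in `Q` is at least `θ` -/
  good_iff : ∀ Q ∈ pMesh,
    (Q ∈ pGood ↔ θ * (volume Q).toReal ≤ (volume (G.Finv '' G.Ω ∩ Q)).toReal)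
  /-- every (bad) element has a chosen good neighbor -/
  nb_good : ∀ Q ∈ pMesh, nb Q ∈ pGood
  nb_self : ∀ Q ∈ pGood, nb Q = Q
  /-- the chosen neighbor is at distance at most `Cnb ⬝ diam Q` -/
  nb_near : ∀ Q ∈ pMesh, ∃ x ∈ Q, ∃ y ∈ nb Q, dist x y ≤ Cnb * diam Q
  hsz_pos : ∀ x, 0 < hsz x
  hsz_eq : ∀ Q ∈ pMesh, ∀ x ∈ G.phys Q, hsz x = diam (G.phys Q)
  hmax_pos : 0 < hmax
  hmax_ge : ∀ Q ∈ pMesh, diam (G.phys Q) ≤ hmax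
  /-- splines are smooth on the closure of every element -/
  vh_smooth : ∀ v ∈ Vh, ∀ Q ∈ pMesh, ContDiffOn ℝ (⊤ : ℕ∞) v (closure (G.phys Q))
  /-- the pull-back of a spline coincides with a `Q_p` polynomial on each element -/
  vh_poly : ∀ v ∈ Vh, ∀ Q ∈ pMesh, ∃ f, IsQPoly p f ∧ EqOn (v ∘ G.F) f Q
  /-- Assumption: `|Γ_K| ≤ CΓ h_K^{d-1}` -/
  ΓK_bound : ∀ Q ∈ pMesh,
    sMeas d (G.ΓK Q) ≤ ENNReal.ofReal (CΓ * diam (G.phys Q) ^ (d - 1))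

variable {d p : ℕ} {θ Cshape Cnb CΓ : ℝ}

/-- Squared `L²(A)` norm of the gradient. -/
def gradSq {d : ℕ} (A : Set (Euc d)) (u : Euc d → ℝ) : ℝ :=
  ∫ x in A, ‖gradient u x‖ ^ 2

/-- `L²(A)` norm of the gradient, `‖∇u‖_{L²(A)}`. -/
def gradL2 {d : ℕ} (A : Set (Euc d)) (u : Euc d → ℝ) : ℝ :=
  Real.sqrt (gradSq A u)

/-- The squared mesh-dependent norm
`‖u‖²_{1,h,Ω} = ‖∇u‖²_{L²(Ω)} + ‖h^{-1/2} u‖²_{L²(Γ_D)}`. -/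
def norm1hSq (G : Geom d) (M : Mesh d p G θ Cshape Cnb CΓ) (u : Euc d → ℝ) : ℝ :=
  gradSq G.Ω u + ∫ x in G.ΓD, u x ^ 2 / M.hsz x ∂(sMeas d)

/-- The mesh-dependent norm `‖u‖_{1,h,Ω}`. -/
def norm1h (G : Geom d) (M : Mesh d p G θ Cshape Cnb CΓ) (u : Euc d → ℝ) : ℝ :=
  Real.sqrt (norm1hSq G M u)

/-- The weighted flux norm `‖h^{1/2} g‖_{L²(Γ_K)}` on the element `K = F(Q)`. -/
def wFlux (G : Geom d) (M : Mesh d p G θ Cshape Cnb CΓ) (Q : Set (Euc d))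
    (g : Euc d → ℝ) : ℝ :=
  Real.sqrt (∫ x in G.ΓK Q, M.hsz x * g x ^ 2 ∂(sMeas d))

open Classical in
/-- `K' = K` if `K` is a good element, otherwise the chosen good neighbor of `K`. -/
def nbOr (G : Geom d) (M : Mesh d p G θ Cshape Cnb CΓ) (Q : Set (Euc d)) :
    Set (Euc d) :=
  if Q ∈ M.pGood then Q else M.nb Q

/-- The symmetric Nitsche bilinear form
`a_h(u,v) = ∫_Ω ∇u⋅∇v - ∫_{Γ_D} ∂u/∂n v - ∫_{Γ_D} u ∂v/∂n + β ∫_{Γ_D} h⁻¹ u v`. -/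
def ah (G : Geom d) (M : Mesh d p G θ Cshape Cnb CΓ) (β : ℝ) (u v : Euc d → ℝ) : ℝ :=
  (∫ x in G.Ω, ⟪gradient u x, gradient v x⟫_ℝ)
    - (∫ x in G.ΓD, G.dn u x * v x ∂(sMeas d))
    - (∫ x in G.ΓD, u x * G.dn v x ∂(sMeas d))
    + β * ∫ x in G.ΓD, u x * v x / M.hsz x ∂(sMeas d)

/-- The stabilized bilinear form
`ā_h(u,v) = ∫_Ω ∇u⋅∇v - ∫_{Γ_D} R(u) v - ∫_{Γ_D} u R(v) + β ∫_{Γ_D} h⁻¹ u v`. -/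
def abarh (G : Geom d) (M : Mesh d p G θ Cshape Cnb CΓ)
    (R : (Euc d → ℝ) → Euc d → ℝ) (β : ℝ) (u v : Euc d → ℝ) : ℝ :=
  (∫ x in G.Ω, ⟪gradient u x, gradient v x⟫_ℝ)
    - (∫ x in G.ΓD, R u x * v x ∂(sMeas d))
    - (∫ x in G.ΓD, u x * R v x ∂(sMeas d))
    + β * ∫ x in G.ΓD, u x * v x / M.hsz x ∂(sMeas d)

/-- `R` is the stabilization operator obtained by polynomial extension in the
parametric domain (Definition 6.2): on good cut elements it is the normal
derivative, on bad elements it is the normal derivative of the push-forward of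
the natural polynomial extension `𝓔(v̂|_{Q'})` from the good neighbor `Q'`. -/
def IsParamStab (G : Geom d) (M : Mesh d p G θ Cshape Cnb CΓ)
    (R : (Euc d → ℝ) → Euc d → ℝ) : Prop :=
  ∀ v ∈ M.Vh,
    (∀ Q ∈ M.pCut, Q ∈ M.pGood → ∀ x ∈ G.ΓK Q, R v x = G.dn v x) ∧
    (∀ Q ∈ M.pCut, Q ∉ M.pGood → ∃ q : Euc d → ℝ, IsQPoly p q ∧
      EqOn (v ∘ G.F) q (M.nb Q) ∧ ∀ x ∈ G.ΓK Q, R v x = G.dn (q ∘ G.Finv) x)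

/-- `R` is the stabilization operator obtained by `L²`-projection in the physical
domain (Definition 6.3): on good cut elements it is the normal derivative, on bad
elements it is the normal derivative of the natural polynomial extension of the
`L²(K')`-orthogonal projection of `v|_{K'}` onto `Q_p(K')`. -/
def IsPhysStab (G : Geom d) (M : Mesh d p G θ Cshape Cnb CΓ)
    (R : (Euc d → ℝ) → Euc d → ℝ) : Prop :=
  ∀ v ∈ M.Vh,
    (∀ Q ∈ M.pCut, Q ∈ M.pGood → ∀ x ∈ G.ΓK Q, R v x = G.dn v x) ∧
    (∀ Q ∈ M.pCut, Q ∉ M.pGood → ∃ q : Euc d → ℝ, IsQPoly p q ∧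
      (∀ r : Euc d → ℝ, IsQPoly p r → ∫ x in G.phys (M.nb Q), (v x - q x) * r x = 0) ∧
      ∀ x ∈ G.ΓK Q, R v x = G.dn q x)

/-- An abstract framework of (fractional) Sobolev norms `‖⋅‖_{H^s(A)}` together
with a bounded Sobolev–Stein extension operator from `Ω` (restricted to `Ω₀`). -/
structure Sob (d : ℕ) (Ω Ω₀ : Set (Euc d)) : Type where
  /-- `mem s A v` means `v ∈ H^s(A)` -/
  mem : ℝ → Set (Euc d) → (Euc d → ℝ) → Prop
  /-- `norm s A v` is `‖v‖_{H^s(A)}` -/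
  norm : ℝ → Set (Euc d) → (Euc d → ℝ) → ℝ
  norm_nonneg : ∀ s A v, 0 ≤ norm s A v
  mem_mono_set : ∀ s (A B : Set (Euc d)) v, A ⊆ B → mem s B v → mem s A v
  mem_mono_exp : ∀ s t (A : Set (Euc d)) v, s ≤ t → mem t A v → mem s A v
  norm_mono_set : ∀ s (A B : Set (Euc d)) v, A ⊆ B → norm s A v ≤ norm s B v
  norm_mono_exp : ∀ s t (A : Set (Euc d)) v, s ≤ t → mem t A v → norm s A v ≤ norm t A v
  /-- `H⁰ = L²` -/
  norm_zero : ∀ (A : Set (Euc d)) v, norm 0 A v = Real.sqrt (∫ x in A, v x ^ 2)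
  /-- the gradient seminorm is dominated by the `H¹` norm -/
  grad_le_one : ∀ (A : Set (Euc d)) v, mem 1 A v → gradL2 A v ≤ norm 1 A v
  /-- the Sobolev–Stein extension operator (its restriction to `Ω₀`) -/
  ext : (Euc d → ℝ) → Euc d → ℝ
  ext_eq : ∀ v, EqOn (ext v) v Ω
  ext_bound : ∀ s : ℝ, 0 ≤ s → ∃ C > (0 : ℝ), ∀ v, mem s Ω v →
    mem s Ω₀ (ext v) ∧ norm s Ω₀ (ext v) ≤ C * norm s Ω v

/-- The Laplacian of `u : ℝᵈ → ℝ`. -/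
def lapl {d : ℕ} (u : Euc d → ℝ) (x : Euc d) : ℝ :=
  ∑ i : Fin d, fderiv ℝ (fun y => fderiv ℝ u y (EuclideanSpace.single i 1)) x
    (EuclideanSpace.single i 1)

end

/-!
The interior cone condition makes `∂Ω` locally a Lipschitz graph: of two nearby boundary points
neither lies in the cone of the other, so the orthogonal projection along the cone axis is
bi-Lipschitz on a piece of `∂Ω`. By compactness the surface measure `ν` on `∂Ω` then satisfies
`ν (B(z, r)) ≤ A r^(d-1)` for all balls, and only this enters the trace inequality; how the mesh
meets `∂Ω` is irrelevant.

Pulled back by the bi-Lipschitz map `F`, the claim concerns a convex open `Q` of diameter `h` and an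
upper regular measure `ν` on `closure Q`. For `x ∈ closure Q` and `y ∈ Q`, integrating along the
segment and applying Cauchy–Schwarz with the weight `√t` gives
`|w x|² ≤ 2 |w y|² + 4 h² ∫₀¹ √t |∇w (x + t (y - x))|² dt`.
Integrate over `y ∈ Q` and over `x` with respect to `ν`. For fixed `t` the dilation
`y ↦ x + t (y - x)` costs `t^(-d)` and maps `Q` into `B(x, t h)`; exchanging the integrals, upper
regularity returns `A (t h)^(d-1)`. The powers of `t` combine to `t⁻¹`, which the weight turns into
the integrable `t^(-1/2)`, and dividing by `|Q| ≥ (c h)^d` leaves the stated powers of `h`.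
-/

/-! ### Upper regular measures -/

/-- Upper Ahlfors regularity of dimension `n` with constant `A`: every closed ball of radius `r`
has `ν`-mass at most `A * r ^ n`. The centre is an arbitrary point of the space, not only a point of
the support of `ν`, and there is no upper bound on `r`. -/
def IsUpperRegular {X : Type*} [PseudoMetricSpace X] [MeasurableSpace X] (ν : Measure X) (n : ℕ)
    (A : ℝ≥0) : Prop :=
  ∀ z (r : ℝ≥0), ν (closedBall z r) ≤ A * (r : ℝ≥0∞) ^ n

namespace IsUpperRegular

variable {X Y : Type*} [PseudoMetricSpace X] [MeasurableSpace X] [PseudoMetricSpace Y]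
  [MeasurableSpace Y] {ν ν' : Measure X} {n : ℕ} {A B : ℝ≥0}

lemma mono (hν : IsUpperRegular ν n A) (h : ν' ≤ ν) : IsUpperRegular ν' n A :=
  fun z r => (h _).trans (hν z r)

lemma add (hν : IsUpperRegular ν n A) (hν' : IsUpperRegular ν' n B) :
    IsUpperRegular (ν + ν') n (A + B) := fun z r => by
  rw [Measure.add_apply, ENNReal.coe_add, add_mul]
  exact add_le_add (hν z r) (hν' z r)

lemma map [OpensMeasurableSpace Y] (hν : IsUpperRegular ν n A) {f : X → Y} (hf : AEMeasurable f ν)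
    {s : Set X} (hs : ∀ᵐ x ∂ν, x ∈ s) {L : ℝ≥0}
    (hL : ∀ x ∈ s, ∀ y ∈ s, dist x y ≤ L * dist (f x) (f y)) :
    IsUpperRegular (ν.map f) n (A * (2 * L) ^ n) := by
  intro z r
  rw [Measure.map_apply_of_aemeasurable hf measurableSet_closedBall,
    ← measure_inter_conull (t := s) hs]
  rcases (f ⁻¹' closedBall z r ∩ s).eq_empty_or_nonempty with h | ⟨x₀, hx₀, hx₀s⟩
  · simp only [h, measure_empty, zero_le]
  have hsub : f ⁻¹' closedBall z r ∩ s ⊆ closedBall x₀ (2 * L * r : ℝ≥0) := by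
    rintro x ⟨hx, hxs⟩
    calc dist x x₀ ≤ L * dist (f x) (f x₀) := hL x hxs x₀ hx₀s
      _ ≤ L * (r + r) := by
        gcongr
        exact (dist_triangle_right _ _ z).trans (add_le_add hx hx₀)
      _ = (2 * L * r : ℝ≥0) := by push_cast; ring
  calc ν (f ⁻¹' closedBall z r ∩ s) ≤ A * ((2 * L * r : ℝ≥0) : ℝ≥0∞) ^ n :=
      (measure_mono hsub).trans (hν x₀ _)
    _ = _ := by push_cast; ring

lemma measure_univ_le (hν : IsUpperRegular ν n A) {y : X} {r : ℝ≥0}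
    (hy : ∀ᵐ x ∂ν, x ∈ closedBall y r) : ν univ ≤ A * (r : ℝ≥0∞) ^ n :=
  (measure_mono_ae (hy.mono fun _ hx _ => hx)).trans (hν y r)

lemma isLocallyFiniteMeasure (hν : IsUpperRegular ν n A) : IsLocallyFiniteMeasure ν :=
  ⟨fun x => ⟨closedBall x (1 : ℝ≥0), closedBall_mem_nhds x one_pos,
    (hν x 1).trans_lt (by finiteness)⟩⟩

lemma lintegral_setLIntegral_closedBall_le [SecondCountableTopology X] [OpensMeasurableSpace X]
    (hν : IsUpperRegular ν n A) (μ : Measure X) [SFinite μ] {f : X → ℝ≥0∞} (hf : Measurable f)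
    (r : ℝ≥0) :
    ∫⁻ x, ∫⁻ z in closedBall x r, f z ∂μ ∂ν ≤ A * (r : ℝ≥0∞) ^ n * ∫⁻ z, f z ∂μ := by
  have := hν.isLocallyFiniteMeasure
  have hmeas : Measurable fun p : X × X => (closedBall p.1 r).indicator f p.2 :=
    (hf.comp measurable_snd).indicator (s := {p : X × X | dist p.2 p.1 ≤ r})
      (measurableSet_le (by fun_prop) (by fun_prop))
  calc ∫⁻ x, ∫⁻ z in closedBall x r, f z ∂μ ∂ν
      = ∫⁻ x, ∫⁻ z, (closedBall x r).indicator f z ∂μ ∂ν := by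
        simp only [lintegral_indicator measurableSet_closedBall]
    _ = ∫⁻ z, ∫⁻ x, (closedBall x r).indicator f z ∂ν ∂μ :=
        lintegral_lintegral_swap hmeas.aemeasurable
    _ = ∫⁻ z, f z * ν (closedBall z r) ∂μ := by
        refine lintegral_congr fun z => ?_
        rw [← lintegral_indicator_const measurableSet_closedBall]
        simp only [indicator, mem_closedBall, dist_comm]
    _ ≤ ∫⁻ z, f z * (A * (r : ℝ≥0∞) ^ n) ∂μ := by gcongr with z; exact hν z r
    _ = A * (r : ℝ≥0∞) ^ n * ∫⁻ z, f z ∂μ := by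
        rw [lintegral_mul_const _ hf, mul_comm]

end IsUpperRegular

section Antilipschitz

open Module

variable {X V : Type*} [MetricSpace X] [MeasurableSpace X] [BorelSpace X]
  [NormedAddCommGroup V] [NormedSpace ℝ V] [FiniteDimensional ℝ V]

lemma exists_isUpperRegular_restrict_hausdorffMeasure {φ : X → V} {L K : ℝ≥0} {s : Set X}
    (hφ : LipschitzWith L φ) (hs : AntilipschitzWith K (s.domRestrict φ)) :
    ∃ A, IsUpperRegular (μH[finrank ℝ V].restrict s) (finrank ℝ V) A := by
  borelize V
  set n := finrank ℝ V
  have hball : μH[n] (closedBall (0 : V) 1) ≠ ∞ := measure_closedBall_lt_top.ne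
  refine ⟨K ^ n * L ^ n * (μH[n] (closedBall (0 : V) 1)).toNNReal, fun z r => ?_⟩
  have hcoe : Isometry ((↑) : s → X) := isometry_subtype_coe
  set t : Set s := Subtype.val ⁻¹' closedBall z r
  have himage : s.domRestrict φ '' t ⊆ closedBall (φ z) (L * r) := by
    rintro _ ⟨x, hx, rfl⟩
    exact (hφ.dist_le_mul _ _).trans (by gcongr; exact hx)
  calc μH[n].restrict s (closedBall z r) = μH[n] t := by
        rw [Measure.restrict_apply measurableSet_closedBall, inter_comm,
          ← hcoe.hausdorffMeasure_image (Or.inl n.cast_nonneg),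
          Subtype.image_preimage_coe]
    _ ≤ K ^ (n : ℝ) * μH[n] (s.domRestrict φ '' t) :=
        hs.le_hausdorffMeasure_image n.cast_nonneg t
    _ ≤ K ^ (n : ℝ) * μH[n] (closedBall (φ z) (L * r)) := by gcongr
    _ = _ := by
        rw [Measure.addHaar_closedBall' _ _ (by positivity), ENNReal.rpow_natCast,
          ENNReal.ofReal_pow (by positivity), ENNReal.ofReal_mul (by positivity)]
        push_cast [ENNReal.coe_toNNReal hball, ENNReal.ofReal_coe_nnreal]
        ring

end Antilipschitz

/-! ### Surface measure under an interior cone condition -/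

section Cone

open Module

variable {E : Type*} [NormedAddCommGroup E] [InnerProductSpace ℝ E]

/-- The interior cone condition of `Ω` at `x`: there is one axis `e` such that every point of
`closure Ω` near `x` is the apex of a truncated cone around `e` contained in `Ω`. The cone is
written as a union of balls `ball (y + t • e) (lam * t)`. -/
def HasInteriorCone (Ω : Set E) (x : E) : Prop :=
  ∃ (e : E) (r lam : ℝ), ‖e‖ = 1 ∧ 0 < r ∧ 0 < lam ∧
    ∀ y ∈ ball x r ∩ closure Ω, ∀ t ∈ Ioo (0 : ℝ) r, ball (y + t • e) (lam * t) ⊆ Ω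

lemma norm_orthogonalProjectionOnto_span_singleton_orthogonal {e : E} (he : ‖e‖ = 1) (x : E) :
    ‖(ℝ ∙ e)ᗮ.orthogonalProjectionOnto x‖ = ‖x - ⟪e, x⟫_ℝ • e‖ := by
  rw [← Submodule.norm_coe, Submodule.coe_orthogonalProjectionOnto_apply,
    Submodule.starProjection_orthogonal_val, Submodule.starProjection_unit_singleton ℝ he]

lemma norm_le_norm_sub_inner_smul_add_abs_inner {e : E} (he : ‖e‖ = 1) (x : E) :
    ‖x‖ ≤ ‖x - ⟪e, x⟫_ℝ • e‖ + |⟪e, x⟫_ℝ| := by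
  calc ‖x‖ = ‖(x - ⟪e, x⟫_ℝ • e) + ⟪e, x⟫_ℝ • e‖ := by rw [sub_add_cancel]
    _ ≤ _ := norm_add_le _ _
    _ = _ := by rw [norm_smul, he, mul_one, Real.norm_eq_abs]

lemma mul_abs_inner_sub_le_of_cone {Ω : Set E} (hΩ : IsOpen Ω) {x e : E} {r lam : ℝ}
    (he : ‖e‖ = 1)
    (hcone : ∀ y ∈ ball x r ∩ closure Ω, ∀ t ∈ Ioo (0 : ℝ) r, ball (y + t • e) (lam * t) ⊆ Ω)
    {a b : E} (ha : a ∈ frontier Ω ∩ ball x (r / 2)) (hb : b ∈ frontier Ω ∩ ball x (r / 2)) :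
    lam * |⟪e, b - a⟫_ℝ| ≤ ‖(b - a) - ⟪e, b - a⟫_ℝ • e‖ := by
  wlog hpos : 0 < ⟪e, b - a⟫_ℝ generalizing a b
  · rcases (not_lt.1 hpos).eq_or_lt with hzero | hneg
    · simp [hzero]
    · have hflip : ⟪e, a - b⟫_ℝ = -⟪e, b - a⟫_ℝ := by rw [← inner_neg_right, neg_sub]
      have := this hb ha (by rwa [hflip, neg_pos])
      rwa [hflip, abs_neg, ← norm_neg, show -(a - b - -⟪e, b - a⟫_ℝ • e) =
        b - a - ⟪e, b - a⟫_ℝ • e by module] at this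
  by_contra! hlt
  rw [abs_of_pos hpos] at hlt
  have hr : ⟪e, b - a⟫_ℝ < r := by
    calc ⟪e, b - a⟫_ℝ ≤ ‖e‖ * ‖b - a‖ := real_inner_le_norm _ _
      _ = dist b a := by rw [he, one_mul, dist_eq_norm]
      _ ≤ dist b x + dist a x := dist_triangle_right _ _ _
      _ < r / 2 + r / 2 := add_lt_add hb.2 ha.2
      _ = r := add_halves r
  have haball : a ∈ ball x r := ball_subset_ball (by linarith) ha.2
  have hbΩ : b ∈ Ω := hcone a ⟨haball, frontier_subset_closure ha.1⟩ _ ⟨hpos, hr⟩ <| by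
    rwa [mem_ball, dist_eq_norm, ← sub_sub]
  rw [hΩ.frontier_eq] at hb
  exact hb.1.2 hbΩ

variable [FiniteDimensional ℝ E] [MeasurableSpace E] [BorelSpace E] {n : ℕ}

lemma exists_isUpperRegular_restrict_nhds_of_hasInteriorCone (hn : finrank ℝ E = n + 1)
    {Ω : Set E} (hΩ : IsOpen Ω) {x : E} (hx : HasInteriorCone Ω x) :
    ∃ s ∈ nhdsWithin x (frontier Ω), ∃ A, IsUpperRegular (μH[n].restrict s) n A := by
  obtain ⟨e, r, lam, he, hr, hlam, hcone⟩ := hx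
  have : Fact (finrank ℝ E = n + 1) := ⟨hn⟩
  have hrank : finrank ℝ (ℝ ∙ e)ᗮ = n :=
    Submodule.finrank_orthogonal_span_singleton (norm_ne_zero_iff.1 (by simp [he]))
  refine ⟨frontier Ω ∩ ball x (r / 2), inter_mem_nhdsWithin _ (ball_mem_nhds _ (by positivity)),
    ?_⟩
  rw [← hrank]
  refine exists_isUpperRegular_restrict_hausdorffMeasure (K := (1 + lam⁻¹).toNNReal)
    (ℝ ∙ e)ᗮ.lipschitzWith_orthogonalProjectionOnto (.of_le_mul_dist fun b a => ?_)
  have hinner : |⟪e, b - (a : E)⟫_ℝ| ≤ lam⁻¹ * ‖b - (a : E) - ⟪e, b - (a : E)⟫_ℝ • e‖ :=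
    (le_inv_mul_iff₀ hlam).2 (mul_abs_inner_sub_le_of_cone hΩ he hcone a.2 b.2)
  rw [Real.coe_toNNReal _ (by positivity), Subtype.dist_eq, dist_eq_norm, dist_eq_norm]
  simp only [domRestrict_apply]
  rw [← map_sub, norm_orthogonalProjectionOnto_span_singleton_orthogonal he]
  linarith [norm_le_norm_sub_inner_smul_add_abs_inner he (b - (a : E))]

theorem exists_isUpperRegular_restrict_frontier (hn : finrank ℝ E = n + 1) {Ω : Set E}
    (hΩ : IsOpen Ω) (hbdd : Bornology.IsBounded Ω)
    (hcone : ∀ x ∈ frontier Ω, HasInteriorCone Ω x) :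
    ∃ A, IsUpperRegular (μH[n].restrict (frontier Ω)) n A := by
  have hcompact : IsCompact (frontier Ω) :=
    isCompact_of_isClosed_isBounded isClosed_frontier (hbdd.closure.subset frontier_subset_closure)
  refine hcompact.induction_on (p := fun s => ∃ A, IsUpperRegular (μH[n].restrict s) n A)
    ⟨0, fun z r => by simp⟩ ?mono ?union
    fun x hx => exists_isUpperRegular_restrict_nhds_of_hasInteriorCone hn hΩ (hcone x hx)
  case mono =>
    rintro s t hst ⟨A, hA⟩
    exact ⟨A, hA.mono (Measure.restrict_mono hst le_rfl)⟩
  case union =>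
    rintro s t ⟨A, hA⟩ ⟨B, hB⟩
    exact ⟨A + B, (hA.add hB).mono (Measure.restrict_union_le s t)⟩

end Cone

/-! ### The trace inequality on convex sets -/

lemma sq_lintegral_le_lintegral_inv_mul_lintegral_mul_sq {α : Type*} [MeasurableSpace α]
    {μ : Measure α} {ρ f : α → ℝ≥0∞} (hρ : AEMeasurable ρ μ) (hf : AEMeasurable f μ)
    (hρ₀ : ∀ᵐ a ∂μ, ρ a ≠ 0) (hρ_top : ∀ᵐ a ∂μ, ρ a ≠ ∞) :
    (∫⁻ a, f a ∂μ) ^ 2 ≤ (∫⁻ a, (ρ a)⁻¹ ∂μ) * ∫⁻ a, ρ a * f a ^ 2 ∂μ := by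
  have hsplit : ∀ᵐ a ∂μ, f a = (ρ a)⁻¹ ^ (1 / 2 : ℝ) * (ρ a * f a ^ 2) ^ (1 / 2 : ℝ) := by
    filter_upwards [hρ₀, hρ_top] with a h₀ h_top
    rw [← ENNReal.mul_rpow_of_nonneg _ _ (by norm_num), ← mul_assoc,
      ENNReal.inv_mul_cancel h₀ h_top, one_mul, ← ENNReal.rpow_natCast, ← ENNReal.rpow_mul]
    norm_num
  have hholder := ENNReal.lintegral_mul_norm_pow_le hρ.inv (hρ.mul (hf.pow_const 2))
    (p := 1 / 2) (q := 1 / 2) (by norm_num) (by norm_num) (by norm_num)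
  calc (∫⁻ a, f a ∂μ) ^ 2
      = (∫⁻ a, (ρ a)⁻¹ ^ (1 / 2 : ℝ) * (ρ a * f a ^ 2) ^ (1 / 2 : ℝ) ∂μ) ^ 2 := by
        rw [lintegral_congr_ae hsplit]
    _ ≤ ((∫⁻ a, (ρ a)⁻¹ ∂μ) ^ (1 / 2 : ℝ) * (∫⁻ a, ρ a * f a ^ 2 ∂μ) ^ (1 / 2 : ℝ)) ^ 2 := by
        gcongr; exact hholder
    _ = _ := by
        rw [mul_pow, ← ENNReal.rpow_mul_natCast, ← ENNReal.rpow_mul_natCast]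
        norm_num

lemma lintegral_Ioc_inv_sqrt : ∫⁻ t in Ioc (0 : ℝ) 1, (ENNReal.ofReal √t)⁻¹ = 2 := by
  have hint : IntegrableOn (fun t : ℝ => t ^ (-(1 / 2) : ℝ)) (Ioc 0 1) :=
    (intervalIntegrable_iff_integrableOn_Ioc_of_le zero_le_one).1
      (intervalIntegral.intervalIntegrable_rpow' (by norm_num))
  calc ∫⁻ t in Ioc (0 : ℝ) 1, (ENNReal.ofReal √t)⁻¹
      = ∫⁻ t in Ioc (0 : ℝ) 1, ENNReal.ofReal (t ^ (-(1 / 2) : ℝ)) := by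
        refine setLIntegral_congr_fun measurableSet_Ioc fun t ht => ?_
        rw [← ENNReal.ofReal_inv_of_pos (Real.sqrt_pos.2 ht.1), Real.sqrt_eq_rpow,
          Real.rpow_neg ht.1.le]
    _ = ENNReal.ofReal (∫ t in Ioc (0 : ℝ) 1, t ^ (-(1 / 2) : ℝ)) := by
        refine (ofReal_integral_eq_lintegral_ofReal hint ?_).symm
        filter_upwards [self_mem_ae_restrict measurableSet_Ioc] with t ht
        exact Real.rpow_nonneg ht.1.le _
    _ = 2 := by
        rw [← intervalIntegral.integral_of_le zero_le_one, integral_rpow (Or.inl (by norm_num))]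
        norm_num

lemma sq_lintegral_Ioc_le_two_mul_lintegral_sqrt_mul_sq {f : ℝ → ℝ≥0∞}
    (hf : AEMeasurable f (volume.restrict (Ioc 0 1))) :
    (∫⁻ t in Ioc (0 : ℝ) 1, f t) ^ 2 ≤
      2 * ∫⁻ t in Ioc (0 : ℝ) 1, ENNReal.ofReal √t * f t ^ 2 := by
  rw [← lintegral_Ioc_inv_sqrt]
  refine sq_lintegral_le_lintegral_inv_mul_lintegral_mul_sq (by fun_prop) hf ?_
    (.of_forall fun t => ENNReal.ofReal_ne_top)
  filter_upwards [self_mem_ae_restrict measurableSet_Ioc] with t ht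
  exact (ENNReal.ofReal_pos.2 (Real.sqrt_pos.2 ht.1)).ne'

lemma subset_closedBall_of_mem_closure_of_ediam_le {X : Type*} [PseudoMetricSpace X] {s : Set X}
    {h : ℝ≥0} (hs : ediam s ≤ h) {x : X} (hx : x ∈ closure s) : s ⊆ closedBall x h := by
  intro y hy
  have : edist y x ≤ h :=
    (edist_le_ediam_of_mem (subset_closure hy) hx).trans (ediam_closure s |>.trans_le hs)
  rwa [edist_le_coe, ← NNReal.coe_le_coe] at this

section Convex

open Module

variable {E W : Type*} [NormedAddCommGroup E] [NormedSpace ℝ E] [NormedAddCommGroup W]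
  [NormedSpace ℝ W]

lemma enorm_sub_le_lintegral_fderiv_segment {Q : Set E} (hQo : IsOpen Q) (hQc : Convex ℝ Q)
    {w : E → W} (hwc : ContinuousOn w (closure Q)) (hw : ContDiffOn ℝ 1 w Q)
    {x y : E} (hx : x ∈ closure Q) (hy : y ∈ Q) :
    ‖w y - w x‖ₑ ≤
      ∫⁻ t in Ioc (0 : ℝ) 1, Q.indicator (‖fderiv ℝ w ·‖ₑ) (x + t • (y - x)) * ‖y - x‖ₑ := by
  set γ : ℝ → E := fun t => x + t • (y - x) with hγ
  have hγ₀ : γ 0 = x := by simp [hγ]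
  have hγ₁ : γ 1 = y := by simp [hγ]
  have hγ_smooth : ContDiff ℝ 1 γ := by fun_prop
  have hγ_deriv (t : ℝ) : HasDerivAt γ (y - x) t := by
    simpa [hγ] using ((hasDerivAt_id t).smul_const (y - x)).const_add x
  have hγ_mem : MapsTo γ (Ioc 0 1) Q := fun t ht => by
    simpa [hQo.interior_eq] using
      hQc.add_smul_sub_mem_interior' hx (hQo.interior_eq.symm ▸ hy) ht
  have hγ_mem_closure : MapsTo γ (Icc 0 1) (closure Q) := fun t ht =>
    hQc.closure.add_smul_sub_mem hx (subset_closure hy) ht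
  have hbound : ∀ ε ∈ Ioc (0 : ℝ) 1, ‖w y - w (γ ε)‖ₑ ≤
      ∫⁻ t in Ioc (0 : ℝ) 1, Q.indicator (‖fderiv ℝ w ·‖ₑ) (γ t) * ‖y - x‖ₑ := by
    intro ε hε
    have hsub : Icc ε 1 ⊆ Ioc (0 : ℝ) 1 := fun t ht => ⟨hε.1.trans_le ht.1, ht.2⟩
    have hftc := enorm_sub_le_lintegral_deriv_of_contDiffOn_Icc
      (hw.comp hγ_smooth.contDiffOn (hγ_mem.mono_left hsub)) hε.2
    rw [Function.comp_apply, Function.comp_apply, hγ₁] at hftc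
    refine (hftc.trans (lintegral_mono_set hsub)).trans
      (setLIntegral_mono' measurableSet_Ioc fun t ht => ?_)
    have hdiff : DifferentiableAt ℝ w (γ t) :=
      (hw.contDiffAt (hQo.mem_nhds (hγ_mem ht))).differentiableAt one_ne_zero
    rw [(hdiff.hasFDerivAt.comp_hasDerivAt t (hγ_deriv t)).deriv, indicator_of_mem (hγ_mem ht)]
    exact ContinuousLinearMap.le_opENorm _ _
  have hcont : ContinuousOn (fun t => ‖w y - w (γ t)‖ₑ) (Icc 0 1) :=
    (continuousOn_const.sub (hwc.comp hγ_smooth.continuous.continuousOn hγ_mem_closure)).enorm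
  have hlim := (hcont 0 (by simp)).mono Ioc_subset_Icc_self
  have : (nhdsWithin (0 : ℝ) (Ioc 0 1)).NeBot := by
    rw [nhdsWithin_Ioc_eq_nhdsGT zero_lt_one]; infer_instance
  simpa only [hγ₀] using le_of_tendsto hlim (eventually_nhdsWithin_of_forall hbound)

variable [MeasurableSpace E] [BorelSpace E]

lemma setLIntegral_closedBall_comp_add_smul_sub [FiniteDimensional ℝ E] (μ : Measure E)
    [μ.IsAddHaarMeasure] (f : E → ℝ≥0∞) (x : E) (h : ℝ) {t : ℝ} (ht : 0 < t) :
    ∫⁻ y in closedBall x h, f (x + t • (y - x)) ∂μ =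
      ENNReal.ofReal (t ^ finrank ℝ E)⁻¹ * ∫⁻ z in closedBall x (t * h), f z ∂μ := by
  set T : E ≃ᵐ E := (MeasurableEquiv.subRight x).trans
    ((MeasurableEquiv.smul₀ t ht.ne').trans (MeasurableEquiv.addLeft x))
  have hT : ∀ y, T y = x + t • (y - x) := fun y => rfl
  have hmap : μ.map T = ENNReal.ofReal (t ^ finrank ℝ E)⁻¹ • μ := by
    have hcomp : ⇑T = (x + ·) ∘ (t • ·) ∘ (· - x) := rfl
    rw [hcomp, ← Measure.map_map (by fun_prop) (by fun_prop),
      ← Measure.map_map (by fun_prop) (by fun_prop), map_sub_right_eq_self,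
      Measure.map_addHaar_smul μ ht.ne', Measure.map_smul, map_add_left_eq_self,
      abs_of_pos (by positivity)]
  have hpre : closedBall x h = T ⁻¹' closedBall x (t * h) := by
    ext y
    simp [hT, dist_eq_norm, norm_smul, abs_of_pos ht, ht]
  calc _ = ∫⁻ z in closedBall x (t * h), f z ∂(μ.map T) := by
        rw [T.measurableEmbedding.restrict_map, T.measurableEmbedding.lintegral_map, ← hpre]
        rfl
    _ = _ := by rw [hmap, Measure.restrict_smul, lintegral_smul_measure, smul_eq_mul]

lemma IsUpperRegular.lintegral_setLIntegral_comp_segment_le [FiniteDimensional ℝ E] {n : ℕ}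
    (hn : finrank ℝ E = n + 1) {ν : Measure E} {A h : ℝ≥0} (hν : IsUpperRegular ν n A)
    (μ : Measure E) [μ.IsAddHaarMeasure] {s : Set E} (hs : ∀ᵐ x ∂ν, s ⊆ closedBall x h)
    {f : E → ℝ≥0∞} (hf : Measurable f) {t : ℝ} (ht : 0 < t) :
    ∫⁻ x, ∫⁻ y in s, f (x + t • (y - x)) ∂μ ∂ν ≤
      ENNReal.ofReal t⁻¹ * (A * (h : ℝ≥0∞) ^ n * ∫⁻ z, f z ∂μ) := by
  set r : ℝ≥0 := t.toNNReal * h with hr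
  have hr' : t * h = r := by rw [hr, NNReal.coe_mul, Real.coe_toNNReal _ ht.le]
  calc ∫⁻ x, ∫⁻ y in s, f (x + t • (y - x)) ∂μ ∂ν
      ≤ ∫⁻ x, ∫⁻ y in closedBall x h, f (x + t • (y - x)) ∂μ ∂ν :=
        lintegral_mono_ae (hs.mono fun x hx => lintegral_mono_set hx)
    _ = ENNReal.ofReal (t ^ (n + 1))⁻¹ * ∫⁻ x, ∫⁻ z in closedBall x r, f z ∂μ ∂ν := by
        simp only [setLIntegral_closedBall_comp_add_smul_sub μ f _ _ ht, hn, hr']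
        rw [lintegral_const_mul' _ _ ENNReal.ofReal_ne_top]
    _ ≤ ENNReal.ofReal (t ^ (n + 1))⁻¹ * (A * (r : ℝ≥0∞) ^ n * ∫⁻ z, f z ∂μ) := by
        gcongr
        exact hν.lintegral_setLIntegral_closedBall_le μ hf r
    _ = ENNReal.ofReal ((t ^ (n + 1))⁻¹ * t ^ n) * (A * (h : ℝ≥0∞) ^ n * ∫⁻ z, f z ∂μ) := by
        rw [ENNReal.ofReal_mul (by positivity), ENNReal.ofReal_pow ht.le, hr, ENNReal.coe_mul,
          show (t.toNNReal : ℝ≥0∞) = ENNReal.ofReal t from rfl]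
        ring
    _ = ENNReal.ofReal t⁻¹ * (A * (h : ℝ≥0∞) ^ n * ∫⁻ z, f z ∂μ) := by
        congr 2
        field_simp
        ring

lemma IsUpperRegular.lintegral_sqrt_mul_comp_segment_le [FiniteDimensional ℝ E] {n : ℕ}
    (hn : finrank ℝ E = n + 1) {ν : Measure E} {A h : ℝ≥0} (hν : IsUpperRegular ν n A)
    (μ : Measure E) [μ.IsAddHaarMeasure] {s : Set E} (hs : ∀ᵐ x ∂ν, s ⊆ closedBall x h)
    {f : E → ℝ≥0∞} (hf : Measurable f) :
    ∫⁻ x, (∫⁻ y in s, (∫⁻ t in Ioc (0 : ℝ) 1, ENNReal.ofReal √t * f (x + t • (y - x))) ∂μ) ∂ν ≤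
      2 * (A * (h : ℝ≥0∞) ^ n * ∫⁻ z, f z ∂μ) := by
  have := hν.isLocallyFiniteMeasure
  calc ∫⁻ x, (∫⁻ y in s, (∫⁻ t in Ioc (0 : ℝ) 1, ENNReal.ofReal √t * f (x + t • (y - x))) ∂μ) ∂ν
      = ∫⁻ x, (∫⁻ t in Ioc (0 : ℝ) 1, (∫⁻ y in s, ENNReal.ofReal √t * f (x + t • (y - x)) ∂μ)) ∂ν :=
        lintegral_congr fun x => lintegral_lintegral_swap (by fun_prop)
    _ = ∫⁻ t in Ioc (0 : ℝ) 1, ∫⁻ x, ∫⁻ y in s, ENNReal.ofReal √t * f (x + t • (y - x)) ∂μ ∂ν :=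
        lintegral_lintegral_swap <| Measurable.aemeasurable <|
          Measurable.lintegral_prod_right' (f := fun q : (E × ℝ) × E =>
            ENNReal.ofReal √q.1.2 * f (q.1.1 + q.1.2 • (q.2 - q.1.1))) (by fun_prop)
    _ ≤ ∫⁻ t in Ioc (0 : ℝ) 1, (ENNReal.ofReal √t)⁻¹ * (A * (h : ℝ≥0∞) ^ n * ∫⁻ z, f z ∂μ) := by
        refine setLIntegral_mono' measurableSet_Ioc fun t ht => ?_
        simp only [lintegral_const_mul' _ _ ENNReal.ofReal_ne_top]
        refine (mul_le_mul_right (hν.lintegral_setLIntegral_comp_segment_le hn μ hs hf ht.1)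
          _).trans_eq ?_
        rw [← mul_assoc, ← ENNReal.ofReal_mul (Real.sqrt_nonneg t), ← div_eq_mul_inv,
          Real.sqrt_div_self', one_div, ENNReal.ofReal_inv_of_pos (Real.sqrt_pos.2 ht.1)]
    _ = 2 * (A * (h : ℝ≥0∞) ^ n * ∫⁻ z, f z ∂μ) := by
        rw [lintegral_mul_const _ (by fun_prop), lintegral_Ioc_inv_sqrt]

lemma enorm_sq_le_add_lintegral_segment [CompleteSpace W] {Q : Set E} (hQo : IsOpen Q)
    (hQc : Convex ℝ Q) {w : E → W} (hwc : ContinuousOn w (closure Q)) (hw : ContDiffOn ℝ 1 w Q)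
    {h : ℝ≥0} {x y : E} (hx : x ∈ closure Q) (hy : y ∈ Q) (hxy : dist y x ≤ h) :
    ‖w x‖ₑ ^ 2 ≤ 2 * ‖w y‖ₑ ^ 2 + 4 * (h : ℝ≥0∞) ^ 2 * ∫⁻ t in Ioc (0 : ℝ) 1,
      ENNReal.ofReal √t * Q.indicator (‖fderiv ℝ w ·‖ₑ ^ 2) (x + t • (y - x)) := by
  set g : E → ℝ≥0∞ := Q.indicator (‖fderiv ℝ w ·‖ₑ) with hg
  have hgm : Measurable g := (measurable_fderiv ℝ w).enorm.indicator hQo.measurableSet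
  have hg_sq (z : E) : Q.indicator (‖fderiv ℝ w ·‖ₑ ^ 2) z = g z ^ 2 := by
    by_cases hz : z ∈ Q <;> simp [hg, hz]
  have hdist : ‖y - x‖ₑ ≤ h := by
    rwa [← edist_eq_enorm_sub, edist_le_coe, ← NNReal.coe_le_coe]
  have hsub : ‖w y - w x‖ₑ ≤ (∫⁻ t in Ioc (0 : ℝ) 1, g (x + t • (y - x))) * h := by
    rw [← lintegral_mul_const _ (by fun_prop)]
    refine (enorm_sub_le_lintegral_fderiv_segment hQo hQc hwc hw hx hy).trans ?_
    gcongr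
  simp only [hg_sq]
  calc ‖w x‖ₑ ^ 2 = ‖w y - (w y - w x)‖ₑ ^ 2 := by rw [sub_sub_cancel]
    _ ≤ (‖w y‖ₑ + ‖w y - w x‖ₑ) ^ 2 := by gcongr; exact enorm_sub_le
    _ ≤ 2 * (‖w y‖ₑ ^ 2 + ‖w y - w x‖ₑ ^ 2) := by
        have := ENNReal.rpow_add_le_mul_rpow_add_rpow ‖w y‖ₑ ‖w y - w x‖ₑ (p := 2) (by norm_num)
        norm_num at this
        exact this
    _ ≤ 2 * (‖w y‖ₑ ^ 2 + ((∫⁻ t in Ioc (0 : ℝ) 1, g (x + t • (y - x))) * h) ^ 2) := by gcongr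
    _ = 2 * ‖w y‖ₑ ^ 2 + 2 * h ^ 2 * (∫⁻ t in Ioc (0 : ℝ) 1, g (x + t • (y - x))) ^ 2 := by ring
    _ ≤ 2 * ‖w y‖ₑ ^ 2 + 2 * h ^ 2 *
          (2 * ∫⁻ t in Ioc (0 : ℝ) 1, ENNReal.ofReal √t * g (x + t • (y - x)) ^ 2) := by
        gcongr
        exact sq_lintegral_Ioc_le_two_mul_lintegral_sqrt_mul_sq (by fun_prop)
    _ = _ := by ring

theorem IsUpperRegular.measure_mul_lintegral_enorm_sq_le [FiniteDimensional ℝ E] [CompleteSpace W]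
    {n : ℕ} (hn : finrank ℝ E = n + 1) {ν : Measure E} {A h : ℝ≥0}
    (hν : IsUpperRegular ν n A) (μ : Measure E) [μ.IsAddHaarMeasure] {Q : Set E} (hQo : IsOpen Q)
    (hQc : Convex ℝ Q) (hQh : ediam Q ≤ h) (hνQ : ∀ᵐ x ∂ν, x ∈ closure Q) {w : E → W}
    (hwc : ContinuousOn w (closure Q)) (hw : ContDiffOn ℝ 1 w Q) :
    μ Q * ∫⁻ x, ‖w x‖ₑ ^ 2 ∂ν ≤ A * (h : ℝ≥0∞) ^ n *
      (2 * ∫⁻ y in Q, ‖w y‖ₑ ^ 2 ∂μ + 8 * (h : ℝ≥0∞) ^ 2 * ∫⁻ y in Q, ‖fderiv ℝ w y‖ₑ ^ 2 ∂μ) := by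
  rcases Q.eq_empty_or_nonempty with rfl | ⟨y₀, hy₀⟩
  · simp
  have hball : ∀ᵐ x ∂ν, Q ⊆ closedBall x h :=
    hνQ.mono fun x => subset_closedBall_of_mem_closure_of_ediam_le hQh
  have hmass : ν univ ≤ A * (h : ℝ≥0∞) ^ n :=
    hν.measure_univ_le (y := y₀) (hball.mono fun x hx => mem_closedBall_comm.1 (hx hy₀))
  set f : E → ℝ≥0∞ := Q.indicator (‖fderiv ℝ w ·‖ₑ ^ 2)
  have hf : Measurable f :=
    ((measurable_fderiv ℝ w).enorm.pow_const 2).indicator hQo.measurableSet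
  set V := ∫⁻ y in Q, ‖w y‖ₑ ^ 2 ∂μ
  have hpoint : ∀ᵐ x ∂ν, μ Q * ‖w x‖ₑ ^ 2 ≤ 2 * V + 4 * (h : ℝ≥0∞) ^ 2 *
      ∫⁻ y in Q, (∫⁻ t in Ioc (0 : ℝ) 1, ENNReal.ofReal √t * f (x + t • (y - x))) ∂μ := by
    filter_upwards [hνQ, hball] with x hx hxQ
    rw [mul_comm, ← setLIntegral_const, ← lintegral_const_mul' 2 _ (by simp),
      ← lintegral_const_mul' _ _ (by finiteness), ← lintegral_add_left' ?_]
    · exact setLIntegral_mono' hQo.measurableSet fun y hy =>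
        enorm_sq_le_add_lintegral_segment hQo hQc hwc hw hx hy (hxQ hy)
    · exact ((hw.continuousOn.enorm.aemeasurable hQo.measurableSet).pow_const 2).const_mul 2
  calc μ Q * ∫⁻ x, ‖w x‖ₑ ^ 2 ∂ν
      ≤ ∫⁻ x, μ Q * ‖w x‖ₑ ^ 2 ∂ν := lintegral_const_mul_le _ _
    _ ≤ 2 * V * ν univ + 4 * (h : ℝ≥0∞) ^ 2 * ∫⁻ x, (∫⁻ y in Q,
          (∫⁻ t in Ioc (0 : ℝ) 1, ENNReal.ofReal √t * f (x + t • (y - x))) ∂μ) ∂ν := by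
        refine (lintegral_mono_ae hpoint).trans_eq ?_
        rw [lintegral_add_left measurable_const, lintegral_const,
          lintegral_const_mul' _ _ (by finiteness)]
    _ ≤ 2 * V * (A * (h : ℝ≥0∞) ^ n) +
          4 * (h : ℝ≥0∞) ^ 2 * (2 * (A * (h : ℝ≥0∞) ^ n * ∫⁻ z, f z ∂μ)) := by
        gcongr
        exact hν.lintegral_sqrt_mul_comp_segment_le hn μ hball hf
    _ = _ := by
        rw [lintegral_indicator hQo.measurableSet]
        ring

end Convex

/-! ### Transport by bi-Lipschitz maps -/

section LipschitzImage

open Module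

variable {E : Type*} [NormedAddCommGroup E] [NormedSpace ℝ E] [FiniteDimensional ℝ E]
  [MeasurableSpace E] [BorelSpace E] (μ : Measure E) [μ.IsAddHaarMeasure]

lemma addHaar_image_le_of_lipschitzOnWith {L : ℝ≥0} {f : E → E} {s : Set E}
    (hf : LipschitzOnWith L f s) :
    μ (f '' s) ≤ (L : ℝ≥0∞) ^ finrank ℝ E * μ s := by
  have hle := hf.hausdorffMeasure_image_le (d := finrank ℝ E) (Nat.cast_nonneg _)
  rw [ENNReal.rpow_natCast] at hle
  rw [Measure.isAddLeftInvariant_eq_smul μ μH[finrank ℝ E], Measure.smul_apply, Measure.smul_apply,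
    ENNReal.smul_def, ENNReal.smul_def, smul_eq_mul, smul_eq_mul, mul_left_comm]
  gcongr

lemma setLIntegral_comp_le_of_leftInvOn {L : ℝ≥0} {f g : E → E} {s : Set E}
    (hs : MeasurableSet s) (hf : ContinuousOn f s) (hgf : LeftInvOn g f s)
    (hg : LipschitzOnWith L g (f '' s)) {φ : E → ℝ≥0∞} (hφ : AEMeasurable φ (μ.restrict (f '' s))) :
    ∫⁻ y in s, φ (f y) ∂μ ≤ (L : ℝ≥0∞) ^ finrank ℝ E * ∫⁻ x in f '' s, φ x ∂μ := by
  have hfm : AEMeasurable f (μ.restrict s) := hf.aemeasurable hs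
  have hle : (μ.restrict s).map f ≤ (L : ℝ≥0∞) ^ finrank ℝ E • μ.restrict (f '' s) := by
    refine Measure.le_iff.2 fun t ht => ?_
    have himage : f ⁻¹' t ∩ s ⊆ g '' (t ∩ f '' s) := fun y ⟨hyt, hys⟩ =>
      ⟨f y, ⟨hyt, mem_image_of_mem f hys⟩, hgf hys⟩
    rw [Measure.map_apply_of_aemeasurable hfm ht, Measure.restrict_apply' hs, Measure.smul_apply,
      Measure.restrict_apply ht, smul_eq_mul]
    exact (measure_mono himage).trans
      (addHaar_image_le_of_lipschitzOnWith μ (hg.mono inter_subset_right))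
  calc ∫⁻ y in s, φ (f y) ∂μ = ∫⁻ x, φ x ∂(μ.restrict s).map f :=
        (lintegral_map' ((hφ.smul_measure _).mono_measure hle) hfm).symm
    _ ≤ ∫⁻ x, φ x ∂((L : ℝ≥0∞) ^ finrank ℝ E • μ.restrict (f '' s)) := lintegral_mono' hle le_rfl
    _ = (L : ℝ≥0∞) ^ finrank ℝ E * ∫⁻ x in f '' s, φ x ∂μ := lintegral_smul_measure _ _

end LipschitzImage

section LeftInverse

lemma aemeasurable_of_continuousOn_of_ae_mem {X Y : Type*} [TopologicalSpace X] [MeasurableSpace X]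
    [OpensMeasurableSpace X] [TopologicalSpace Y] [MeasurableSpace Y] [BorelSpace Y] {f : X → Y}
    {s : Set X} {ν : Measure X} (hf : ContinuousOn f s) (hs : MeasurableSet s)
    (hν : ∀ᵐ x ∂ν, x ∈ s) : AEMeasurable f ν := by
  rw [← Measure.restrict_eq_self_of_ae_mem hν]
  exact hf.aemeasurable hs

variable {X Y : Type*} [MeasurableSpace X] [MeasurableSpace Y] {F : X → Y} {G : Y → X} {s : Set X}
  {ν : Measure Y}

lemma ae_map_mem_of_leftInvOn (hGF : LeftInvOn G F s) (hG : AEMeasurable G ν)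
    (hs : MeasurableSet s) (hν : ∀ᵐ x ∂ν, x ∈ F '' s) : ∀ᵐ y ∂ν.map G, y ∈ s := by
  refine (ae_map_iff hG hs).2 (hν.mono ?_)
  rintro _ ⟨y, hy, rfl⟩
  rwa [hGF hy]

lemma lintegral_map_comp_of_leftInvOn (hGF : LeftInvOn G F s) (hG : AEMeasurable G ν)
    (hν : ∀ᵐ x ∂ν, x ∈ F '' s) {φ : Y → ℝ≥0∞} (hφ : AEMeasurable (φ ∘ F) (ν.map G)) :
    ∫⁻ y, φ (F y) ∂ν.map G = ∫⁻ x, φ x ∂ν := by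
  refine (lintegral_map' hφ hG).trans (lintegral_congr_ae (hν.mono ?_))
  rintro _ ⟨y, hy, rfl⟩
  simp only [Function.comp_apply, hGF hy]

end LeftInverse

lemma IsUpperRegular.map_of_leftInvOn {X Y : Type*} [PseudoMetricSpace X] [MeasurableSpace X]
    [OpensMeasurableSpace X] [PseudoMetricSpace Y] [MeasurableSpace Y] {F : X → Y} {G : Y → X}
    {s : Set X} {n : ℕ} {A L : ℝ≥0} {ν : Measure Y} (hν : IsUpperRegular ν n A)
    (hF : LipschitzOnWith L F s) (hGF : LeftInvOn G F s) (hG : AEMeasurable G ν)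
    (hs : ∀ᵐ x ∂ν, x ∈ F '' s) : IsUpperRegular (ν.map G) n (A * (2 * L) ^ n) := by
  refine hν.map hG hs ?_
  rintro _ ⟨a, ha, rfl⟩ _ ⟨b, hb, rfl⟩
  rw [hGF ha, hGF hb]
  exact hF.dist_le_mul a ha b hb

section Transport

open Module

variable {E W : Type*} [NormedAddCommGroup E] [NormedSpace ℝ E] [MeasurableSpace E]
  [BorelSpace E] [NormedAddCommGroup W] [NormedSpace ℝ W]
  {F G : E → E} {L : ℝ≥0} {Q : Set E} {v : E → W}

lemma setLIntegral_enorm_fderiv_comp_sq_le (μ : Measure E) (hQ : IsOpen Q)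
    (hF : DifferentiableOn ℝ F Q) (hFL : LipschitzOnWith L F Q) (hFQ : IsOpen (F '' Q))
    (hv : DifferentiableOn ℝ v (F '' Q)) :
    ∫⁻ y in Q, ‖fderiv ℝ (v ∘ F) y‖ₑ ^ 2 ∂μ ≤
      (L : ℝ≥0∞) ^ 2 * ∫⁻ y in Q, ‖fderiv ℝ v (F y)‖ₑ ^ 2 ∂μ := by
  rw [← lintegral_const_mul' _ _ (by finiteness)]
  refine setLIntegral_mono' hQ.measurableSet fun y hy => ?_
  have hFy : ‖fderiv ℝ F y‖ₑ ≤ L :=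
    enorm_le_coe.2 (norm_fderiv_le_of_lipschitzOn ℝ (hQ.mem_nhds hy) hFL)
  rw [fderiv_comp y (hv.differentiableAt (hFQ.mem_nhds (mem_image_of_mem F hy)))
    (hF.differentiableAt (hQ.mem_nhds hy)), ← mul_pow, mul_comm]
  gcongr
  exact (ContinuousLinearMap.opENorm_comp_le _ _).trans (by gcongr)

theorem IsUpperRegular.measure_mul_lintegral_enorm_sq_le_of_leftInvOn [FiniteDimensional ℝ E]
    [CompleteSpace W] {n : ℕ} (hn : finrank ℝ E = n + 1) {ν : Measure E} {A h : ℝ≥0}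
    (hν : IsUpperRegular ν n A) (μ : Measure E) [μ.IsAddHaarMeasure] (hQo : IsOpen Q)
    (hQc : Convex ℝ Q) (hQh : ediam Q ≤ h) (hF : LipschitzOnWith L F (closure Q))
    (hFd : ContDiffOn ℝ 1 F Q) (hFQ : IsOpen (F '' Q)) (hGF : LeftInvOn G F (closure Q))
    (hG : LipschitzOnWith L G (F '' closure Q)) (hνQ : ∀ᵐ x ∂ν, x ∈ F '' closure Q)
    (hvc : ContinuousOn v (F '' closure Q)) (hv : ContDiffOn ℝ 1 v (F '' Q)) :
    μ Q * ∫⁻ x, ‖v x‖ₑ ^ 2 ∂ν ≤ A * (2 * L) ^ n * L ^ (n + 1) * (h : ℝ≥0∞) ^ n *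
      (2 * ∫⁻ x in F '' Q, ‖v x‖ₑ ^ 2 ∂μ +
        8 * L ^ 2 * (h : ℝ≥0∞) ^ 2 * ∫⁻ x in F '' Q, ‖fderiv ℝ v x‖ₑ ^ 2 ∂μ) := by
  have hcompact : IsCompact (closure Q) :=
    (isBounded_iff_ediam_ne_top.2 (hQh.trans_lt ENNReal.coe_lt_top).ne).isCompact_closure
  have hGm : AEMeasurable G ν := aemeasurable_of_continuousOn_of_ae_mem hG.continuousOn
    (hcompact.image_of_continuousOn hF.continuousOn).measurableSet hνQ
  have hνG : ∀ᵐ y ∂ν.map G, y ∈ closure Q :=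
    ae_map_mem_of_leftInvOn hGF hGm hcompact.measurableSet hνQ
  have hw : ContinuousOn (v ∘ F) (closure Q) := hvc.comp hF.continuousOn (mapsTo_image F _)
  have hpull : ∫⁻ y, ‖v (F y)‖ₑ ^ 2 ∂ν.map G = ∫⁻ x, ‖v x‖ₑ ^ 2 ∂ν :=
    lintegral_map_comp_of_leftInvOn (φ := fun x => ‖v x‖ₑ ^ 2) hGF hGm hνQ <|
      (aemeasurable_of_continuousOn_of_ae_mem hw.enorm hcompact.measurableSet hνG).pow_const 2
  have hchange {φ : E → ℝ≥0∞} (hφ : AEMeasurable φ (μ.restrict (F '' Q))) :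
      ∫⁻ y in Q, φ (F y) ∂μ ≤ (L : ℝ≥0∞) ^ (n + 1) * ∫⁻ x in F '' Q, φ x ∂μ :=
    hn ▸ setLIntegral_comp_le_of_leftInvOn μ hQo.measurableSet hFd.continuousOn
      (hGF.mono subset_closure) (hG.mono (image_mono subset_closure)) hφ
  have hval : ∫⁻ y in Q, ‖v (F y)‖ₑ ^ 2 ∂μ ≤ _ :=
    hchange ((hv.continuousOn.enorm.aemeasurable hFQ.measurableSet).pow_const 2)
  have hgrad : ∫⁻ y in Q, ‖fderiv ℝ (v ∘ F) y‖ₑ ^ 2 ∂μ ≤ _ :=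
    (setLIntegral_enorm_fderiv_comp_sq_le μ hQo (hFd.differentiableOn one_ne_zero)
      (hF.mono subset_closure) hFQ (hv.differentiableOn one_ne_zero)).trans <|
    mul_le_mul_right (hchange ((measurable_fderiv ℝ v).enorm.pow_const 2).aemeasurable) _
  rw [← hpull]
  refine ((hν.map_of_leftInvOn hF hGF hGm hνQ).measure_mul_lintegral_enorm_sq_le hn μ hQo hQc hQh
    hνG hw (hv.comp hFd (mapsTo_image F Q))).trans
    ((mul_le_mul_right (add_le_add (mul_le_mul_right hval _) (mul_le_mul_right hgrad _))
      _).trans_eq ?_)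
  push_cast
  ring

end Transport

/-! ### Bounded derivatives and real-valued integrals -/

section BoundedDerivative

variable {E W : Type*} [NormedAddCommGroup E] [NormedSpace ℝ E] [NormedAddCommGroup W]
  [NormedSpace ℝ W] {K s : Set E} {v : E → W}

lemma exists_eventually_norm_fderiv_le (hK : IsOpen K) (hKs : K ⊆ s) {x : E} (hx : x ∈ s)
    (hv : ContDiffWithinAt ℝ 1 v s x) :
    ∃ B : ℝ, ∀ᶠ y in nhdsWithin x K, ‖fderiv ℝ v y‖ ≤ B := by
  obtain ⟨u, hu, -, v', hv', hv'_smooth⟩ :=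
    (contDiffWithinAt_succ_iff_hasFDerivWithinAt (n := 0) (by simp)).1 (by rwa [zero_add])
  rw [insert_eq_of_mem hx] at hu
  have hcont : ContinuousWithinAt v' K x :=
    (hv'_smooth.continuousWithinAt.mono_of_mem_nhdsWithin hu).mono hKs
  refine ⟨‖v' x‖ + 1, ?_⟩
  filter_upwards [self_mem_nhdsWithin, nhdsWithin_mono x hKs hu,
    eventually_eventually_nhdsWithin.2 (nhdsWithin_mono x hKs hu),
    hcont.norm.eventually_le_const (lt_add_one _)] with y hyK hyu huy hbound
  rw [hK.nhdsWithin_eq hyK] at huy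
  rwa [((hv' y hyu).hasFDerivAt huy).fderiv]

lemma exists_norm_fderiv_le_of_contDiffOn_isCompact (hK : IsOpen K) (hKs : K ⊆ s)
    (hs : IsCompact s) (hv : ContDiffOn ℝ 1 v s) : ∃ B : ℝ, ∀ y ∈ K, ‖fderiv ℝ v y‖ ≤ B := by
  suffices h : ∃ B : ℝ, ∀ y ∈ s, y ∈ K → ‖fderiv ℝ v y‖ ≤ B from
    h.imp fun B hB y hy => hB y (hKs hy) hy
  refine hs.induction_on (p := fun t => ∃ B : ℝ, ∀ y ∈ t, y ∈ K → ‖fderiv ℝ v y‖ ≤ B)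
    ⟨0, by simp⟩ ?mono ?union fun x hx => ?nhds
  case mono => exact fun t t' htt' ⟨B, hB⟩ => ⟨B, fun y hy => hB y (htt' hy)⟩
  case union =>
    rintro t t' ⟨B, hB⟩ ⟨B', hB'⟩
    exact ⟨max B B', fun y hy hyK => hy.elim (fun h => (hB y h hyK).trans (le_max_left _ _))
      fun h => (hB' y h hyK).trans (le_max_right _ _)⟩
  case nhds =>
    obtain ⟨B, hB⟩ := exists_eventually_norm_fderiv_le hK hKs hx (hv x hx)
    exact ⟨_, mem_nhdsWithin_of_mem_nhds (mem_nhdsWithin_iff_eventually.1 hB), B, fun y h => h⟩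

end BoundedDerivative

lemma setLIntegral_enorm_sq_ne_top {α W : Type*} [MeasurableSpace α] [NormedAddCommGroup W]
    {μ : Measure α} {K : Set α} {v : α → W} (hK : MeasurableSet K) (hμ : μ K ≠ ∞) {B : ℝ}
    (hB : ∀ y ∈ K, ‖v y‖ ≤ B) : ∫⁻ y in K, ‖v y‖ₑ ^ 2 ∂μ ≠ ∞ := by
  have hB' : ∀ y ∈ K, ‖v y‖ₑ ^ 2 ≤ ENNReal.ofReal B ^ 2 := fun y hy => by
    gcongr
    rw [← ofReal_norm]
    exact ENNReal.ofReal_le_ofReal (hB y hy)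
  refine ((setLIntegral_mono' hK hB').trans_lt ?_).ne
  rw [setLIntegral_const]
  finiteness

lemma integral_norm_sq_eq_toReal_lintegral_enorm_sq {α W : Type*} [MeasurableSpace α]
    [NormedAddCommGroup W] {μ : Measure α} {f : α → W} (hf : AEStronglyMeasurable f μ) :
    ∫ x, ‖f x‖ ^ 2 ∂μ = (∫⁻ x, ‖f x‖ₑ ^ 2 ∂μ).toReal := by
  simpa only [Pi.pow_apply, norm_pow, norm_norm, enorm_pow, enorm_norm] using
    integral_norm_eq_lintegral_enorm (hf.norm.pow 2)

lemma norm_gradient_eq_norm_fderiv {𝕜 E : Type*} [RCLike 𝕜] [NormedAddCommGroup E]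
    [InnerProductSpace 𝕜 E] [CompleteSpace E] (f : E → 𝕜) (x : E) :
    ‖gradient f x‖ = ‖fderiv 𝕜 f x‖ :=
  (InnerProductSpace.toDual 𝕜 E).symm.norm_map _

lemma diam_pos_of_isOpen {E : Type*} [NormedAddCommGroup E] [NormedSpace ℝ E] [Nontrivial E]
    {s : Set E} (hs : IsOpen s) (hne : s.Nonempty) (hb : Bornology.IsBounded s) : 0 < diam s := by
  obtain ⟨x, hx⟩ := hne
  have : (nhdsWithin x {x}ᶜ).NeBot := Module.punctured_nhds_neBot ℝ E x
  exact diam_pos (infinite_of_mem_nhds x (hs.mem_nhds hx)).nontrivial hb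

lemma diam_image_le_of_lipschitzOnWith {X Y : Type*} [PseudoMetricSpace X] [PseudoMetricSpace Y]
    {f : X → Y} {s : Set X} {L : ℝ≥0} (hf : LipschitzOnWith L f s) (hs : Bornology.IsBounded s) :
    diam (f '' s) ≤ L * diam s := by
  refine diam_le_of_forall_dist_le (by positivity) ?_
  rintro _ ⟨x, hx, rfl⟩ _ ⟨y, hy, rfl⟩
  exact (hf.dist_le_mul x hx y hy).trans (by gcongr; exact dist_le_diam_of_mem hs hx hy)

/-! ### The isogeometric setting -/

lemma isBounded_unitCube (d : ℕ) : Bornology.IsBounded (unitCube d) := by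
  refine isBounded_iff_forall_norm_le.2 ⟨√d, fun x hx => ?_⟩
  rw [EuclideanSpace.norm_eq]
  gcongr
  calc ∑ i, ‖x i‖ ^ 2 ≤ ∑ _i : Fin d, (1 : ℝ) := by
        gcongr with i
        rw [Real.norm_eq_abs, sq_abs]
        nlinarith [(hx i).1, (hx i).2]
    _ = d := by simp

namespace IsBox

variable {d : ℕ} {Q : Set (Euc d)}

lemma isOpen (hQ : IsBox Q) : IsOpen Q := by
  obtain ⟨a, b, -, rfl⟩ := hQ
  rw [ofPred_forall]
  exact isOpen_iInter_of_finite fun i => isOpen_Ioo.preimage (by fun_prop)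

lemma convex (hQ : IsBox Q) : Convex ℝ Q := by
  obtain ⟨a, b, -, rfl⟩ := hQ
  exact fun x hx y hy s t hs ht hst i => convex_Ioo (a i) (b i) (hx i) (hy i) hs ht hst

lemma ofReal_pow_le_volume (hQ : IsBox Q) {c : ℝ} (hc : 0 ≤ c)
    (hcQ : ∀ a b : Fin d → ℝ, Q = {x | ∀ i, x i ∈ Ioo (a i) (b i)} → ∀ i, c ≤ b i - a i) :
    ENNReal.ofReal (c ^ d) ≤ volume Q := by
  obtain ⟨a, b, -, hab⟩ := hQ
  have hpre : Q = (MeasurableEquiv.toLp 2 (Fin d → ℝ)).symm ⁻¹'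
      univ.pi fun i => Ioo (a i) (b i) := by
    ext x
    simp [hab]
  rw [hpre, (EuclideanSpace.volume_preserving_symm_measurableEquiv_toLp
    (Fin d)).measure_preimage_equiv, Real.volume_pi_Ioo, ENNReal.ofReal_pow hc]
  calc ENNReal.ofReal c ^ d = ∏ _i : Fin d, ENNReal.ofReal c := by simp
    _ ≤ ∏ i, ENNReal.ofReal (b i - a i) :=
      Finset.prod_le_prod' fun i _ => ENNReal.ofReal_le_ofReal (hcQ a b hab i)

end IsBox

namespace Geom

variable {d : ℕ} (G : Geom d) {Q : Set (Euc d)} {v : Euc d → ℝ}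

lemma phys_subset (hQ : Q ⊆ unitCube d) : G.phys Q ⊆ G.Ω₀ :=
  G.F_image ▸ image_mono hQ

lemma leftInvOn (hQ : Q ⊆ closure (unitCube d)) : LeftInvOn G.Finv G.F Q :=
  fun x hx => G.F_leftInv x (hQ hx)

lemma image_closure (hQ : Q ⊆ unitCube d) : G.F '' closure Q = closure (G.phys Q) :=
  image_closure_of_isCompact ((isBounded_unitCube d).subset hQ).isCompact_closure
    (G.F_lip.continuousOn.mono (closure_mono hQ))

lemma isOpen_phys (hQo : IsOpen Q) (hQ : Q ⊆ unitCube d) : IsOpen (G.phys Q) := by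
  have hphys : G.phys Q = G.Ω₀ ∩ G.Finv ⁻¹' Q := by
    ext y
    constructor
    · rintro ⟨x, hx, rfl⟩
      refine ⟨G.phys_subset hQ (mem_image_of_mem _ hx), ?_⟩
      rwa [mem_preimage, G.F_leftInv x (subset_closure (hQ hx))]
    · rintro ⟨hy, hyQ⟩
      exact ⟨G.Finv y, hyQ, G.F_rightInv y (subset_closure hy)⟩
  rw [hphys]
  exact (G.Finv_lip.continuousOn.mono subset_closure).isOpen_inter_preimage G.Ω₀_open hQo

lemma isBounded_Ω₀ : Bornology.IsBounded G.Ω₀ := by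
  have hcompact : IsCompact (G.F '' closure (unitCube d)) :=
    (isBounded_unitCube d).isCompact_closure.image_of_continuousOn G.F_lip.continuousOn
  exact hcompact.isBounded.subset (G.F_image ▸ image_mono subset_closure)

lemma isBounded_phys (hQ : Q ⊆ unitCube d) : Bornology.IsBounded (G.phys Q) :=
  G.isBounded_Ω₀.subset (G.phys_subset hQ)

lemma diam_phys_le (hQ : Q ⊆ unitCube d) : diam (G.phys Q) ≤ G.biLip * diam Q :=
  diam_image_le_of_lipschitzOnWith (G.F_lip.mono (hQ.trans subset_closure))
    ((isBounded_unitCube d).subset hQ)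

lemma diam_le_diam_phys (hQ : Q ⊆ unitCube d) : diam Q ≤ G.biLip * diam (G.phys Q) := by
  have := diam_image_le_of_lipschitzOnWith
    (G.Finv_lip.mono ((G.phys_subset hQ).trans subset_closure)) (G.isBounded_phys hQ)
  rwa [phys, (G.leftInvOn (hQ.trans subset_closure)).image_image] at this

lemma ΓK_subset_frontier : G.ΓK Q ⊆ frontier G.Ω :=
  inter_subset_left.trans G.ΓD_sub

lemma integral_phys_div_add_integral_phys_mul (hQo : IsOpen Q) (hQ : Q ⊆ unitCube d) {h : Euc d → ℝ}
    (hh : ∀ x ∈ G.phys Q, h x = diam (G.phys Q)) (f g : Euc d → ℝ) :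
    (∫ x in G.phys Q, f x / h x) + ∫ x in G.phys Q, h x * g x =
      (∫ x in G.phys Q, f x) / diam (G.phys Q) + diam (G.phys Q) * ∫ x in G.phys Q, g x := by
  rw [← integral_div, ← integral_const_mul]
  have hmeas := (G.isOpen_phys hQo hQ).measurableSet
  congr 1 <;> exact setIntegral_congr_fun hmeas fun x hx => by simp only [hh x hx]

lemma ΓK_eq_empty_of_dim_zero (G : Geom 0) (Q : Set (Euc 0)) : G.ΓK Q = ∅ :=
  subset_empty_iff.1 (G.ΓK_subset_frontier.trans (isClopen_discrete G.Ω).frontier_eq.subset)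

lemma ΓK_empty : G.ΓK ∅ = ∅ := by
  simp [ΓK, phys]

lemma setLIntegral_phys_enorm_sq_ne_top (hQo : IsOpen Q) (hQ : Q ⊆ unitCube d)
    (hv : ContinuousOn v (closure (G.phys Q))) : ∫⁻ x in G.phys Q, ‖v x‖ₑ ^ 2 ≠ ∞ := by
  obtain ⟨B, hB⟩ := (G.isBounded_phys hQ).isCompact_closure.exists_bound_of_continuousOn hv
  exact setLIntegral_enorm_sq_ne_top (G.isOpen_phys hQo hQ).measurableSet
    (G.isBounded_phys hQ).measure_lt_top.ne fun x hx => hB x (subset_closure hx)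

lemma setLIntegral_phys_enorm_fderiv_sq_ne_top (hQo : IsOpen Q) (hQ : Q ⊆ unitCube d)
    (hv : ContDiffOn ℝ 1 v (closure (G.phys Q))) :
    ∫⁻ x in G.phys Q, ‖fderiv ℝ v x‖ₑ ^ 2 ≠ ∞ := by
  obtain ⟨B, hB⟩ := exists_norm_fderiv_le_of_contDiffOn_isCompact (G.isOpen_phys hQo hQ)
    subset_closure (G.isBounded_phys hQ).isCompact_closure hv
  exact setLIntegral_enorm_sq_ne_top (G.isOpen_phys hQo hQ).measurableSet
    (G.isBounded_phys hQ).measure_lt_top.ne hB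

lemma exists_isUpperRegular_sMeas_frontier {n : ℕ} (G : Geom (n + 1)) :
    ∃ A, IsUpperRegular ((sMeas (n + 1)).restrict (frontier G.Ω)) n A := by
  have hΩ : G.Ω ⊆ G.Ω₀ := G.trim_def ▸ sdiff_subset
  have hdim : ((n + 1 : ℕ) : ℝ) - 1 = n := by push_cast; ring
  rw [sMeas, hdim]
  exact exists_isUpperRegular_restrict_frontier (by simp) G.Ω_open (G.isBounded_Ω₀.subset hΩ)
    G.lipschitz_bdry

end Geom

lemma le_mul_div_add_mul_of_pow_mul_le {n : ℕ} {I V W B L c h H : ℝ} (hV : 0 ≤ V) (hW : 0 ≤ W)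
    (hB : 0 ≤ B) (hL : 0 ≤ L) (hc : 0 < c) (hh : 0 < h) (hH : 0 < H) (hhH : h ≤ L * H)
    (hHh : H ≤ L * h)
    (hle : (c * h) ^ (n + 1) * I ≤ B * h ^ n * (2 * V + 8 * L ^ 2 * h ^ 2 * W)) :
    I ≤ B / c ^ (n + 1) * (2 * L + 8 * L ^ 3) * (V / H + H * W) := by
  have hinv : h⁻¹ ≤ L * H⁻¹ := by
    rw [← div_eq_mul_inv, le_div_iff₀ hH, inv_mul_le_iff₀ hh, mul_comm]
    exact hHh
  calc I ≤ B / c ^ (n + 1) * (2 * (h⁻¹ * V) + 8 * L ^ 2 * (h * W)) := by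
        refine le_of_mul_le_mul_left (hle.trans_eq ?_) (by positivity : 0 < (c * h) ^ (n + 1))
        field_simp
        ring
    _ ≤ B / c ^ (n + 1) * (2 * (L * H⁻¹ * V) + 8 * L ^ 2 * (L * H * W)) := by gcongr
    _ = B / c ^ (n + 1) * (2 * L * (V / H) + 8 * L ^ 3 * (H * W)) := by ring
    _ ≤ B / c ^ (n + 1) * ((2 * L + 8 * L ^ 3) * (V / H) + (2 * L + 8 * L ^ 3) * (H * W)) := by
        gcongr
        exacts [le_add_of_nonneg_right (by positivity), le_add_of_nonneg_left (by positivity)]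
    _ = B / c ^ (n + 1) * (2 * L + 8 * L ^ 3) * (V / H + H * W) := by ring

namespace Geom

variable {n : ℕ} (G : Geom (n + 1)) {A : ℝ≥0} {Q : Set (Euc (n + 1))} {v : Euc (n + 1) → ℝ}

lemma volume_mul_lintegral_ΓK_le
    (hA : IsUpperRegular ((sMeas (n + 1)).restrict (frontier G.Ω)) n A) (hQo : IsOpen Q)
    (hQc : Convex ℝ Q) (hQ : Q ⊆ unitCube (n + 1)) (hF : ContDiffOn ℝ 1 G.F Q)
    (hv : ContDiffOn ℝ 1 v (closure (G.phys Q))) :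
    volume Q * ∫⁻ x in G.ΓK Q, ‖v x‖ₑ ^ 2 ∂sMeas (n + 1) ≤
      A * (2 * G.biLip) ^ n * G.biLip ^ (n + 1) * ENNReal.ofReal (diam Q) ^ n *
        (2 * (∫⁻ x in G.phys Q, ‖v x‖ₑ ^ 2) +
          8 * G.biLip ^ 2 * ENNReal.ofReal (diam Q) ^ 2 *
            ∫⁻ x in G.phys Q, ‖fderiv ℝ v x‖ₑ ^ 2) := by
  have hν : IsUpperRegular ((sMeas (n + 1)).restrict (G.ΓK Q)) n A :=
    hA.mono (Measure.restrict_mono G.ΓK_subset_frontier le_rfl)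
  have hmem : ∀ᵐ x ∂(sMeas (n + 1)).restrict (G.ΓK Q), x ∈ G.F '' closure Q := by
    rw [G.image_closure hQ]
    exact ae_restrict_of_ae_restrict_of_subset inter_subset_right
      (ae_restrict_mem isClosed_closure.measurableSet)
  have hdiam : ediam Q ≤ (diam Q).toNNReal :=
    (ENNReal.ofReal_toReal ((isBounded_unitCube _).subset hQ).ediam_ne_top).ge
  have hclosure : closure (G.phys Q) ⊆ closure G.Ω₀ := closure_mono (G.phys_subset hQ)
  rw [← G.image_closure hQ] at hv hclosure
  exact hν.measure_mul_lintegral_enorm_sq_le_of_leftInvOn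
    (by simp) volume hQo hQc hdiam (G.F_lip.mono (closure_mono hQ)) hF (G.isOpen_phys hQo hQ)
    (G.leftInvOn (closure_mono hQ)) (G.Finv_lip.mono hclosure) hmem hv.continuousOn
    (hv.mono (image_mono subset_closure))

lemma pow_mul_integral_ΓK_le {c : ℝ} (hc : 0 ≤ c)
    (hA : IsUpperRegular ((sMeas (n + 1)).restrict (frontier G.Ω)) n A) (hQo : IsOpen Q)
    (hQc : Convex ℝ Q) (hQ : Q ⊆ unitCube (n + 1))
    (hcQ : ENNReal.ofReal ((c * diam Q) ^ (n + 1)) ≤ volume Q) (hF : ContDiffOn ℝ 1 G.F Q)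
    (hv : ContDiffOn ℝ 1 v (closure (G.phys Q))) :
    (c * diam Q) ^ (n + 1) * (∫ x in G.ΓK Q, v x ^ 2 ∂sMeas (n + 1)) ≤
      A * (2 * G.biLip) ^ n * G.biLip ^ (n + 1) * diam Q ^ n *
        (2 * (∫ x in G.phys Q, v x ^ 2) +
          8 * G.biLip ^ 2 * diam Q ^ 2 * ∫ x in G.phys Q, ‖gradient v x‖ ^ 2) := by
  have hvol := G.setLIntegral_phys_enorm_sq_ne_top hQo hQ hv.continuousOn
  have hgrad := G.setLIntegral_phys_enorm_fderiv_sq_ne_top hQo hQ hv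
  have hvK : AEStronglyMeasurable v (volume.restrict (G.phys Q)) :=
    (hv.continuousOn.mono subset_closure).aestronglyMeasurable (G.isOpen_phys hQo hQ).measurableSet
  have hvΓ : AEStronglyMeasurable v ((sMeas (n + 1)).restrict (G.ΓK Q)) :=
    (hv.continuousOn.aestronglyMeasurable isClosed_closure.measurableSet).mono_measure
      (Measure.restrict_mono inter_subset_right le_rfl)
  have hle := (mul_le_mul_left hcQ _).trans (G.volume_mul_lintegral_ΓK_le hA hQo hQc hQ hF hv)
  have hle' := ENNReal.toReal_mono (by finiteness) hle
  have hpow : 0 ≤ (c * diam Q) ^ (n + 1) := by positivity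
  rw [ENNReal.toReal_mul, ENNReal.toReal_mul, ENNReal.toReal_add (by finiteness) (by finiteness)]
    at hle'
  simpa [hpow, diam_nonneg, norm_gradient_eq_norm_fderiv,
    ← integral_norm_sq_eq_toReal_lintegral_enorm_sq, hvK, hvΓ,
    (measurable_fderiv ℝ v).aestronglyMeasurable] using hle'

lemma integral_ΓK_le_mul_div_diam_add_diam_mul {c : ℝ} (hc : 0 < c)
    (hA : IsUpperRegular ((sMeas (n + 1)).restrict (frontier G.Ω)) n A) (hQo : IsOpen Q)
    (hQne : Q.Nonempty) (hQc : Convex ℝ Q) (hQ : Q ⊆ unitCube (n + 1))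
    (hcQ : ENNReal.ofReal ((c * diam Q) ^ (n + 1)) ≤ volume Q) (hF : ContDiffOn ℝ 1 G.F Q)
    (hv : ContDiffOn ℝ 1 v (closure (G.phys Q))) :
    ∫ x in G.ΓK Q, v x ^ 2 ∂sMeas (n + 1) ≤
      A * (2 * G.biLip) ^ n * G.biLip ^ (n + 1) / c ^ (n + 1) * (2 * G.biLip + 8 * G.biLip ^ 3) *
        ((∫ x in G.phys Q, v x ^ 2) / diam (G.phys Q) +
          diam (G.phys Q) * ∫ x in G.phys Q, ‖gradient v x‖ ^ 2) := by
  have hdiam_pos : 0 < diam Q := diam_pos_of_isOpen hQo hQne ((isBounded_unitCube _).subset hQ)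
  have hphys_pos : 0 < diam (G.phys Q) :=
    diam_pos_of_isOpen (G.isOpen_phys hQo hQ) (hQne.image _) (G.isBounded_phys hQ)
  exact le_mul_div_add_mul_of_pow_mul_le (by positivity) (by positivity) (by positivity)
    (by positivity) hc hdiam_pos hphys_pos (G.diam_le_diam_phys hQ) (G.diam_phys_le hQ)
    (G.pow_mul_integral_ΓK_le hc.le hA hQo hQc hQ hcQ hF hv)

end Geom

theorem trace_inequality_cut_elements_general {d : ℕ} (G : Geom d) {c : ℝ} (hc : 0 < c) :
    ∃ C > (0 : ℝ), ∀ Q, IsOpen Q → Convex ℝ Q → Q ⊆ unitCube d →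
      ENNReal.ofReal ((c * diam Q) ^ d) ≤ volume Q → ContDiffOn ℝ 1 G.F Q →
      ∀ h : Euc d → ℝ, (∀ x ∈ G.phys Q, h x = diam (G.phys Q)) →
      ∀ v : Euc d → ℝ, ContDiffOn ℝ 1 v (closure (G.phys Q)) →
      (∫ x in G.ΓK Q, v x ^ 2 ∂(sMeas d))
        ≤ C * ((∫ x in G.phys Q, v x ^ 2 / h x)
            + ∫ x in G.phys Q, h x * ‖gradient v x‖ ^ 2) := by
  suffices hC : ∃ C : ℝ, ∀ Q, IsOpen Q → Convex ℝ Q → Q ⊆ unitCube d →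
      ENNReal.ofReal ((c * diam Q) ^ d) ≤ volume Q → ContDiffOn ℝ 1 G.F Q →
      ∀ v : Euc d → ℝ, ContDiffOn ℝ 1 v (closure (G.phys Q)) →
      ∫ x in G.ΓK Q, v x ^ 2 ∂(sMeas d) ≤ C * ((∫ x in G.phys Q, v x ^ 2) / diam (G.phys Q) +
        diam (G.phys Q) * ∫ x in G.phys Q, ‖gradient v x‖ ^ 2) by
    obtain ⟨C, hC⟩ := hC
    refine ⟨max C 1, by positivity, fun Q hQo hQc hQ hcQ hF h hh v hv => ?_⟩
    rw [G.integral_phys_div_add_integral_phys_mul hQo hQ hh (v · ^ 2) (‖gradient v ·‖ ^ 2)]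
    exact (hC Q hQo hQc hQ hcQ hF v hv).trans (by gcongr; exact le_max_left C 1)
  cases d with
  | zero => exact ⟨0, fun Q _ _ _ _ _ v _ => by simp [G.ΓK_eq_empty_of_dim_zero Q]⟩
  | succ n =>
    obtain ⟨A, hA⟩ := G.exists_isUpperRegular_sMeas_frontier
    refine ⟨A * (2 * G.biLip) ^ n * G.biLip ^ (n + 1) / c ^ (n + 1) *
      (2 * G.biLip + 8 * G.biLip ^ 3), fun Q hQo hQc hQ hcQ hF v hv => ?_⟩
    rcases Q.eq_empty_or_nonempty with rfl | hQne
    · simp [G.ΓK_empty, Geom.phys]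
    · exact G.integral_ΓK_le_mul_div_diam_add_diam_mul hc hA hQo hQne hQc hQ hcQ hF hv

noncomputable section

/-- Lemma A.1, after Hansbo–Hansbo.  There exists `C > 0`,
depending on `Γ_D` (i.e. on the fixed geometric setting) but independent of how
the mesh intersects the boundary, such that for every element `K ∈ M_{0,h}` of
every mesh of the family and every `v ∈ H¹(K)`,
`‖v‖²_{L²(Γ_K)} ≤ C (‖h^{-1/2} v‖²_{L²(K)} + ‖h^{1/2} ∇v‖²_{L²(K)})`,
where `Γ_K = Γ_D ∩ cl(K)`. -/
theorem trace_inequality_cut_elements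
    {d p : ℕ} {θ Cshape Cnb CΓ : ℝ} (G : Geom d) {ι : Type}
    (M : ι → Mesh d p G θ Cshape Cnb CΓ) :
    ∃ C > (0 : ℝ), ∀ i, ∀ Q ∈ (M i).pMesh, ∀ v : Euc d → ℝ,
      ContDiffOn ℝ 1 v (closure (G.phys Q)) →
      (∫ x in G.ΓK Q, v x ^ 2 ∂(sMeas d))
        ≤ C * ((∫ x in G.phys Q, v x ^ 2 / (M i).hsz x)
            + ∫ x in G.phys Q, (M i).hsz x * ‖gradient v x‖ ^ 2) := by
  rcases isEmpty_or_nonempty ι with hι | ⟨⟨i₀⟩⟩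
  · exact ⟨1, one_pos, fun i => hι.elim i⟩
  obtain ⟨C, hC, htrace⟩ := trace_inequality_cut_elements_general G (M i₀).shape_pos
  refine ⟨C, hC, fun i Q hQ => ?_⟩
  have hbox : IsBox Q := (M i).mesh_boxes Q hQ
  have hF : ContDiffOn ℝ 1 G.F (closure Q) := ((M i).F_smooth Q hQ).of_le (by simp)
  exact htrace Q hbox.isOpen hbox.convex ((M i).mesh_sub Q hQ)
    (hbox.ofReal_pow_le_volume (mul_nonneg (M i).shape_pos.le diam_nonneg)
      ((M i).shape_reg Q hQ))
    (hF.mono subset_closure) (M i).hsz ((M i).hsz_eq Q hQ)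

end
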